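/- Let k be a Hilbertian field, G a finite group, and E/k(T) a finite separable extension with Aut(E/k(T)) ≅ G. Then there exist infinitely many t₀ ∈ k such that the specialized extension E_{t₀}/k is separable with Aut(E_{t₀}/k) ≅ G. -/

import Mathlib

open Polynomial IntermediateField

set_option synthInstance.maxHeartbeats 1000000
set_option maxHeartbeats 1000000

/-- A field `k` is *Hilbertian* if Hilbert's irreducibility theorem holds over `k`. -/
def IsHilbertian (k : Type*) [Field k] : Prop :=
  ∀ P : Polynomial (Polynomial k),
    Irreducible (P.map (algebraMap (Polynomial k) (RatFunc k))) →
    {t₀ : k | Irreducible (P.map (Polynomial.evalRingHom t₀))}.Infinite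

/-!
Let `A = k[T]`. For a suitable nonzero `n` in `A`, the ring `R = A[1/n][x̂]` contains all conjugates
of `x̂` and the inverses of the nonzero differences `σ x̂ - x̂` and `σ (a(x̂)) - a(x̂)`. If
`n(t₀) ≠ 0` and `P(t₀, X)` is irreducible with root `x_t`, evaluation at `t₀` extends to a ring
homomorphism `φ : R → k(x_t)` with `φ(x̂) = x_t`. Automorphisms specialize along `φ`, and since `φ`
does not kill units, `σ` fixes `x̂` or `a(x̂)` exactly when its specialization fixes the image. By
equality of degrees this identifies the Galois groups, together with the subgroups belonging to `E`
and `E_{t₀}`; and `Aut(E) ≃ N(H) / H`, with `H = Gal(Ê/E)`, depends only on these two groups.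
-/

section Automorphisms

variable {K L : Type*} [Field K] [Field L] [Algebra K L]

theorem mem_fixingSubgroup_adjoin_simple {y : L} {σ : Gal(L/K)} :
    σ ∈ K⟮y⟯.fixingSubgroup ↔ σ y = y := by
  rw [← Subgroup.zpowers_le, ← le_iff_le, adjoin_simple_le_iff]
  exact ⟨fun h ↦ h ⟨σ, Subgroup.mem_zpowers σ⟩,
    fun h τ ↦ (Subgroup.zpowers_le (H := MulAction.stabilizer Gal(L/K) y)).2 h τ.2⟩

section Normalizer

variable [FiniteDimensional K L] [IsGalois K L]

theorem mem_normalizer_fixingSubgroup_iff {F : IntermediateField K L} {σ : Gal(L/K)} :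
    σ ∈ Subgroup.normalizer (F.fixingSubgroup : Set Gal(L/K)) ↔ F.map (σ : L →ₐ[K] L) = F := by
  have hconj : F.fixingSubgroup.map (MulAut.conj σ : Gal(L/K) →* Gal(L/K)) =
      (F.map (σ : L →ₐ[K] L)).fixingSubgroup := (IsGalois.map_fixingSubgroup F σ).symm
  rw [Subgroup.mem_normalizer_iff_map_conj_eq, hconj]
  refine ⟨fun h ↦ ?_, congrArg _⟩
  rw [← IsGalois.fixedField_fixingSubgroup (F.map _), h, IsGalois.fixedField_fixingSubgroup]

/-- The restriction to `F` of the automorphisms normalizing `Gal(L/F)`, which are those mapping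
`F` onto itself. -/
noncomputable def normalizerRestrict (F : IntermediateField K L) :
    Subgroup.normalizer (F.fixingSubgroup : Set Gal(L/K)) →* Gal(F/K) :=
  MonoidHom.mk' (fun σ ↦ (F.equivMap (σ.1 : L →ₐ[K] L)).trans
    (equivOfEq (mem_normalizer_fixingSubgroup_iff.1 σ.2))) fun σ τ ↦ by ext; rfl

theorem coe_normalizerRestrict (F : IntermediateField K L)
    (σ : Subgroup.normalizer (F.fixingSubgroup : Set Gal(L/K))) (x : F) :
    (normalizerRestrict F σ x : L) = σ.1 x := rfl

theorem normalizerRestrict_surjective (F : IntermediateField K L) :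
    Function.Surjective (normalizerRestrict F) := by
  intro τ
  have hτ (x : F) : τ.liftNormal L x = τ x := τ.liftNormal_commutes L x
  have hmap : F.map (τ.liftNormal L : L →ₐ[K] L) = F := by
    ext y
    constructor
    · rintro ⟨x, hx, rfl⟩
      exact (hτ ⟨x, hx⟩).symm ▸ (τ _).2
    · intro hy
      exact ⟨τ.symm ⟨y, hy⟩, (τ.symm _).2, (hτ _).trans (by rw [τ.apply_symm_apply])⟩
  exact ⟨⟨τ.liftNormal L, mem_normalizer_fixingSubgroup_iff.2 hmap⟩, by ext x; exact hτ x⟩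

theorem ker_normalizerRestrict (F : IntermediateField K L) :
    (normalizerRestrict F).ker =
      F.fixingSubgroup.subgroupOf (Subgroup.normalizer F.fixingSubgroup) := by
  ext σ
  simp only [MonoidHom.mem_ker, Subgroup.mem_subgroupOf, IntermediateField.mem_fixingSubgroup_iff,
    AlgEquiv.ext_iff, Subtype.ext_iff, Subtype.forall, coe_normalizerRestrict, AlgEquiv.one_apply]

/-- `N(H) / H ≃ Aut(F/K)` for `H = Gal(L/F)`. -/
noncomputable def normalizerQuotientEquiv (F : IntermediateField K L) :
    Subgroup.normalizer (F.fixingSubgroup : Set Gal(L/K)) ⧸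
      F.fixingSubgroup.subgroupOf (Subgroup.normalizer F.fixingSubgroup) ≃* Gal(F/K) :=
  QuotientGroup.liftEquiv _ (normalizerRestrict_surjective F) (ker_normalizerRestrict F).symm

end Normalizer

/-- The isomorphism `N(H) / H ≃ N(H') / H'` induced by an isomorphism of groups taking `H`
to `H'`. -/
noncomputable def normalizerQuotientCongr {G G' : Type*} [Group G] [Group G'] (e : G ≃* G')
    {H : Subgroup G} {H' : Subgroup G'} (h : H.map (e : G →* G') = H') :
    Subgroup.normalizer (H : Set G) ⧸ H.subgroupOf (Subgroup.normalizer H) ≃*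
      Subgroup.normalizer (H' : Set G') ⧸ H'.subgroupOf (Subgroup.normalizer H') :=
  QuotientGroup.congr _ _
    ((e.subgroupMap _).trans (MulEquiv.subgroupCongr
      (by rw [← h]; exact Subgroup.map_equiv_normalizer_eq H e))) <| by
    subst h
    ext ⟨x, hx⟩
    simp only [Subgroup.mem_map, Subgroup.mem_subgroupOf]
    constructor
    · rintro ⟨y, hy, hyx⟩
      exact ⟨y, hy, congrArg Subtype.val hyx⟩
    · rintro ⟨y, hy, hyx⟩
      exact ⟨⟨y, Subgroup.le_normalizer hy⟩, hy, Subtype.ext hyx⟩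

/-- The isomorphism of automorphism groups of intermediate fields induced by an isomorphism of
Galois groups matching the corresponding subgroups. -/
noncomputable def autEquivOfMapFixingSubgroup {K' L' : Type*} [Field K'] [Field L'] [Algebra K' L']
    [FiniteDimensional K L] [IsGalois K L] [FiniteDimensional K' L'] [IsGalois K' L']
    {F : IntermediateField K L} {F' : IntermediateField K' L'} (e : Gal(L/K) ≃* Gal(L'/K'))
    (h : F.fixingSubgroup.map (e : Gal(L/K) →* Gal(L'/K')) = F'.fixingSubgroup) :
    Gal(F/K) ≃* Gal(F'/K') :=
  (normalizerQuotientEquiv F).symm.trans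
    ((normalizerQuotientCongr e h).trans (normalizerQuotientEquiv F'))

end Automorphisms

section Specialization

variable {A K L κ F : Type*} [CommRing A] [Field K] [Field L] [Field κ] [Field F]
  [Algebra A K] [Algebra K L] [Algebra A L] [IsScalarTower A K L]
  [Algebra A κ] [Algebra κ F]

theorem finrank_eq_of_minpoly_eq_map [IsDomain A] [IsIntegrallyClosed A] [IsFractionRing A K]
    (B : PowerBasis κ F) (C : PowerBasis K L) (hC : IsIntegral A C.gen)
    (hB : minpoly κ B.gen = (minpoly A C.gen).map (algebraMap A κ)) :
    Module.finrank κ F = Module.finrank K L := by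
  rw [B.finrank, C.finrank, ← B.natDegree_minpoly, ← C.natDegree_minpoly, hB,
    minpoly.isIntegrallyClosed_eq_field_fractions' K hC, (minpoly.monic hC).natDegree_map,
    (minpoly.monic hC).natDegree_map]

variable [Algebra A F] [IsScalarTower A κ F]

theorem map_eq_map_iff_of_inv_sub_mem {R : Subalgebra A L} (φ : R →ₐ[A] F) {z w : R}
    (h : (z - w : L)⁻¹ ∈ R) : φ z = φ w ↔ z = w := by
  refine ⟨fun hφ ↦ ?_, congrArg φ⟩
  by_contra hne
  have hunit : (z - w) * ⟨_, h⟩ = 1 :=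
    Subtype.ext (mul_inv_cancel₀ (sub_ne_zero.2 fun hzw ↦ hne (Subtype.ext hzw)))
  have := congrArg φ hunit
  rw [map_mul, map_sub, hφ, sub_self, zero_mul, map_one] at this
  exact zero_ne_one this

theorem map_mem_adjoin_singleton {x : L} (σ : Gal(L/K)) (hσ : σ x ∈ Algebra.adjoin A {x})
    {z : L} (hz : z ∈ Algebra.adjoin A {x}) : σ z ∈ Algebra.adjoin A {x} := by
  have hle : Algebra.adjoin A {x} ≤
      (Algebra.adjoin A {x}).comap ((σ : L →ₐ[K] L).restrictScalars A) :=
    Algebra.adjoin_singleton_le hσ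
  exact hle hz

variable {x : L} (B : PowerBasis κ F) (φ : Algebra.adjoin A {x} →ₐ[A] F)

theorem exists_algEquiv_specialization
    (hφ : φ ⟨x, Algebra.self_mem_adjoin_singleton A x⟩ = B.gen)
    (hB : minpoly κ B.gen = (minpoly A x).map (algebraMap A κ))
    (σ : Gal(L/K)) (hσ : σ x ∈ Algebra.adjoin A {x}) :
    ∃ τ : Gal(F/κ), ∀ z (hz : z ∈ Algebra.adjoin A {x}),
      τ (φ ⟨z, hz⟩) = φ ⟨σ z, map_mem_adjoin_singleton σ hσ hz⟩ := by
  have hroot : aeval (φ ⟨σ x, hσ⟩) (minpoly κ B.gen) = 0 := by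
    have hσx : aeval (⟨σ x, hσ⟩ : Algebra.adjoin A {x}) (minpoly A x) = 0 := by
      refine Subtype.ext ((coe_aeval_mk_apply _ hσ).trans ?_)
      change aeval ((σ : L →ₐ[K] L).restrictScalars A x) _ = 0
      rw [aeval_algHom_apply, minpoly.aeval, map_zero]
    rw [hB, aeval_map_algebraMap, aeval_algHom_apply, hσx, map_zero]
  obtain ⟨τ, hτ⟩ : ∃ τ : F →ₐ[κ] F, τ B.gen = φ ⟨σ x, hσ⟩ :=
    ⟨B.lift _ hroot, B.lift_gen _ hroot⟩
  let σ' : Algebra.adjoin A {x} →ₐ[A] Algebra.adjoin A {x} :=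
    (((σ : L →ₐ[K] L).restrictScalars A).comp (Algebra.adjoin A {x}).val).codRestrict _
      fun z ↦ map_mem_adjoin_singleton σ hσ z.2
  have hcomp : (τ.restrictScalars A).comp φ = φ.comp σ' := by
    refine AlgHom.adjoin_ext fun y hy ↦ ?_
    obtain rfl := hy
    exact (congrArg τ hφ).trans hτ
  have := B.finite
  exact ⟨AlgEquiv.ofBijective τ τ.bijective, fun z hz ↦ DFunLike.congr_fun hcomp ⟨z, hz⟩⟩

theorem exists_monoidHom_specialization
    (hφ : φ ⟨x, Algebra.self_mem_adjoin_singleton A x⟩ = B.gen)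
    (hB : minpoly κ B.gen = (minpoly A x).map (algebraMap A κ))
    (hx : ∀ σ : Gal(L/K), σ x ∈ Algebra.adjoin A {x}) :
    ∃ ρ : Gal(L/K) →* Gal(F/κ), ∀ σ z (hz : z ∈ Algebra.adjoin A {x}),
      ρ σ (φ ⟨z, hz⟩) = φ ⟨σ z, map_mem_adjoin_singleton σ (hx σ) hz⟩ := by
  choose ρ hρ using fun σ ↦ exists_algEquiv_specialization B φ hφ hB σ (hx σ)
  refine ⟨MonoidHom.mk' ρ fun σ τ ↦ ?_, hρ⟩
  refine AlgEquiv.coe_toAlgHom_injective (B.algHom_ext ?_)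
  simp only [AlgEquiv.coe_toAlgHom, AlgEquiv.mul_apply, ← hφ, hρ]

/-- The units `σ x - x` of `A[x]` have nonzero specializations, so the specialized action is
faithful; by equality of degrees it then exhausts `Gal(F/κ)`. -/
theorem isGalois_and_exists_mulEquiv_specialization [IsDomain A] [IsIntegrallyClosed A]
    [IsFractionRing A K] [IsGalois K L] (C : PowerBasis K L) (hC : IsIntegral A C.gen)
    (φ : Algebra.adjoin A {C.gen} →ₐ[A] F)
    (hφ : φ ⟨C.gen, Algebra.self_mem_adjoin_singleton A C.gen⟩ = B.gen)
    (hB : minpoly κ B.gen = (minpoly A C.gen).map (algebraMap A κ))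
    (hconj : ∀ σ : Gal(L/K), σ C.gen ∈ Algebra.adjoin A {C.gen})
    (hinv : ∀ σ : Gal(L/K), (σ C.gen - C.gen)⁻¹ ∈ Algebra.adjoin A {C.gen}) :
    IsGalois κ F ∧ ∃ e : Gal(L/K) ≃* Gal(F/κ), ∀ σ z (hz : z ∈ Algebra.adjoin A {C.gen}),
      e σ (φ ⟨z, hz⟩) = φ ⟨σ z, map_mem_adjoin_singleton σ (hconj σ) hz⟩ := by
  obtain ⟨ρ, hρ⟩ := exists_monoidHom_specialization B φ hφ hB hconj
  have := B.finite
  have := C.finite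
  have hinj : Function.Injective ρ := by
    refine (injective_iff_map_eq_one ρ).2 fun σ hσ ↦ ?_
    have hfix : φ ⟨σ C.gen, hconj σ⟩ = φ ⟨C.gen, Algebra.self_mem_adjoin_singleton A C.gen⟩ := by
      rw [← hρ, hσ, AlgEquiv.one_apply]
    refine AlgEquiv.coe_toAlgHom_injective (C.algHom_ext ?_)
    exact congrArg Subtype.val ((map_eq_map_iff_of_inv_sub_mem φ (hinv σ)).1 hfix)
  have hrank : Nat.card Gal(L/K) = Module.finrank κ F := by
    rw [IsGalois.card_aut_eq_finrank, finrank_eq_of_minpoly_eq_map B C hC hB]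
  have hcard : Nat.card Gal(L/K) = Nat.card Gal(F/κ) := by
    refine le_antisymm (Nat.card_le_card_of_injective ρ hinj) ?_
    rw [hrank, Nat.card_eq_fintype_card]
    exact AlgEquiv.card_le
  exact ⟨IsGalois.of_card_aut_eq_finrank κ F (hcard ▸ hrank),
    MulEquiv.ofBijective ρ ((Nat.bijective_iff_injective_and_card ρ).2 ⟨hinj, hcard⟩), hρ⟩

theorem exists_map_fixingSubgroup_specialization [IsDomain A] [IsIntegrallyClosed A]
    [IsFractionRing A K] [IsGalois K L] (C : PowerBasis K L) (hC : IsIntegral A C.gen)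
    (hB : minpoly κ B.gen = (minpoly A C.gen).map (algebraMap A κ))
    (hconj : ∀ σ : Gal(L/K), σ C.gen ∈ Algebra.adjoin A {C.gen})
    (hinv : ∀ σ : Gal(L/K), (σ C.gen - C.gen)⁻¹ ∈ Algebra.adjoin A {C.gen}) (a : A[X])
    (hinv_a : ∀ σ : Gal(L/K),
      (σ (aeval C.gen a) - aeval C.gen a)⁻¹ ∈ Algebra.adjoin A {C.gen}) :
    IsGalois κ F ∧ ∃ e : Gal(L/K) ≃* Gal(F/κ),
      K⟮aeval C.gen a⟯.fixingSubgroup.map (e : Gal(L/K) →* Gal(F/κ)) =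
        κ⟮aeval B.gen a⟯.fixingSubgroup := by
  have : Module.IsTorsionFree A L := Module.IsTorsionFree.trans_faithfulSMul A K L
  have hroot : aeval B.gen (minpoly A (Algebra.adjoin.powerBasis' hC).gen) = 0 := by
    rw [← Algebra.adjoin.powerBasis'_minpoly_gen, ← aeval_map_algebraMap κ, ← hB, minpoly.aeval]
  let φ : Algebra.adjoin A {C.gen} →ₐ[A] F := (Algebra.adjoin.powerBasis' hC).lift B.gen hroot
  have hφ : φ ⟨C.gen, Algebra.self_mem_adjoin_singleton A C.gen⟩ = B.gen := by
    rw [← Algebra.adjoin.powerBasis'_gen hC]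
    exact (Algebra.adjoin.powerBasis' hC).lift_gen B.gen hroot
  have hmem := aeval_mem_adjoin_singleton A C.gen (p := a)
  have hφa : φ ⟨aeval C.gen a, hmem⟩ = aeval B.gen a := by
    rw [← hφ, aeval_algHom_apply]
    congr 1
    exact Subtype.ext (coe_aeval_mk_apply _ _).symm
  obtain ⟨hgal, e, he⟩ :=
    isGalois_and_exists_mulEquiv_specialization B C hC φ hφ hB hconj hinv
  refine ⟨hgal, e, ?_⟩
  ext τ
  obtain ⟨σ, rfl⟩ := e.surjective τ
  have hfix : e σ (aeval B.gen a) = aeval B.gen a ↔ σ (aeval C.gen a) = aeval C.gen a := by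
    rw [← hφa, he, map_eq_map_iff_of_inv_sub_mem φ (hinv_a σ), Subtype.mk_eq_mk]
  rw [mem_fixingSubgroup_adjoin_simple, hfix, ← mem_fixingSubgroup_adjoin_simple]
  exact Subgroup.mem_map_iff_mem e.injective

end Specialization

section Localization

theorem minpoly_eq_map_of_isIntegral (K : Type*) {A A' L : Type*} [CommRing A] [CommRing A']
    [Field K] [Field L] [Algebra A A'] [Algebra A K] [Algebra A' K] [Algebra A L] [Algebra A' L]
    [Algebra K L] [IsScalarTower A A' K] [IsScalarTower A A' L] [IsScalarTower A K L]
    [IsScalarTower A' K L] [IsDomain A] [IsDomain A'] [IsIntegrallyClosed A]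
    [IsIntegrallyClosed A'] [IsFractionRing A K] [IsFractionRing A' K] {x : L}
    (hx : IsIntegral A x) : minpoly A' x = (minpoly A x).map (algebraMap A A') := by
  refine Polynomial.map_injective _ (IsFractionRing.injective A' K) ?_
  rw [← minpoly.isIntegrallyClosed_eq_field_fractions' K hx.tower_top, Polynomial.map_map,
    ← IsScalarTower.algebraMap_eq, ← minpoly.isIntegrallyClosed_eq_field_fractions' K hx]

variable {A K L : Type*} [CommRing A] [Field K] [Field L] [Algebra A K] [Algebra K L] [Algebra A L]
  [IsScalarTower A K L]

theorem exists_smul_mem_adjoin_gen [IsDomain A] [IsFractionRing A K] (C : PowerBasis K L) (y : L) :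
    ∃ n : A, n ≠ 0 ∧ n • y ∈ Algebra.adjoin A {C.gen} := by
  obtain ⟨q, rfl⟩ := C.exists_eq_aeval' y
  obtain ⟨n, hn, hnq⟩ := IsLocalization.integerNormalization_spec (nonZeroDivisors A) q
  refine ⟨n, nonZeroDivisors.ne_zero hn, ?_⟩
  rw [← AlgHom.map_smul_of_tower, ← hnq, aeval_map_algebraMap]
  exact aeval_mem_adjoin_singleton A C.gen

theorem exists_forall_smul_mem_adjoin_gen [IsDomain A] [IsFractionRing A K] (C : PowerBasis K L)
    {s : Set L} (hs : s.Finite) :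
    ∃ n : A, n ≠ 0 ∧ ∀ y ∈ s, n • y ∈ Algebra.adjoin A {C.gen} := by
  induction s, hs using Set.Finite.induction_on with
  | empty => exact ⟨1, one_ne_zero, by simp⟩
  | @insert y s _ _ ih =>
    obtain ⟨m, hm, hs⟩ := ih
    obtain ⟨n, hn, hy⟩ := exists_smul_mem_adjoin_gen (A := A) C y
    refine ⟨m * n, mul_ne_zero hm hn, Set.forall_mem_insert.2 ⟨?_, fun z hz ↦ ?_⟩⟩
    · rw [mul_smul]
      exact Subalgebra.smul_mem _ hy m
    · rw [mul_comm, mul_smul]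
      exact Subalgebra.smul_mem _ (hs z hz) n

theorem mem_adjoin_of_smul_mem_adjoin {A' : Type*} [CommRing A'] [Algebra A A'] [Algebra A' L]
    [IsScalarTower A A' L] {n : A} (hn : IsUnit (algebraMap A A' n)) {s : Set L} {y : L}
    (hy : n • y ∈ Algebra.adjoin A s) : y ∈ Algebra.adjoin A' s := by
  have hle : Algebra.adjoin A s ≤ (Algebra.adjoin A' s).restrictScalars A :=
    Algebra.adjoin_le Algebra.subset_adjoin
  have hny : algebraMap A A' n • y ∈ Algebra.adjoin A' s := by
    rw [algebraMap_smul]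
    exact hle hy
  simpa only [smul_smul, IsUnit.val_inv_mul, one_smul] using
    Subalgebra.smul_mem _ hny (↑hn.unit⁻¹ : A')

theorem exists_forall_map_fixingSubgroup_specialization [IsDomain A] [IsIntegrallyClosed A]
    [IsFractionRing A K] [IsGalois K L] (C : PowerBasis K L) (hC : IsIntegral A C.gen) (a : A[X]) :
    ∃ n : A, n ≠ 0 ∧ ∀ {κ F : Type*} [Field κ] [Field F] [Algebra A κ] [Algebra κ F] [Algebra A F]
      [IsScalarTower A κ F] (B : PowerBasis κ F), algebraMap A κ n ≠ 0 →
      minpoly κ B.gen = (minpoly A C.gen).map (algebraMap A κ) →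
      IsGalois κ F ∧ ∃ e : Gal(L/K) ≃* Gal(F/κ),
        K⟮aeval C.gen a⟯.fixingSubgroup.map (e : Gal(L/K) →* Gal(F/κ)) =
          κ⟮aeval B.gen a⟯.fixingSubgroup := by
  have := C.finite
  obtain ⟨n, hn, hmem⟩ := exists_forall_smul_mem_adjoin_gen (A := A) C
    (((Set.finite_range fun σ : Gal(L/K) ↦ σ C.gen).union
      (Set.finite_range fun σ : Gal(L/K) ↦ (σ C.gen - C.gen)⁻¹)).union
      (Set.finite_range fun σ : Gal(L/K) ↦ (σ (aeval C.gen a) - aeval C.gen a)⁻¹))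
  refine ⟨n, hn, fun {κ F} _ _ _ _ _ _ B hnκ hB ↦ ?_⟩
  have hpow := powers_le_nonZeroDivisors_of_noZeroDivisors hn
  let A' := Localization.subalgebra.ofField K (Submonoid.powers n) hpow
  have : IsLocalization.Away n A' := inferInstanceAs (IsLocalization (Submonoid.powers n) A')
  have : IsFractionRing A' K := inferInstance
  have : IsIntegrallyClosed A' := isIntegrallyClosed_of_isLocalization A' _ hpow
  have hmem' (y) (hy : n • y ∈ Algebra.adjoin A {C.gen}) : y ∈ Algebra.adjoin A' {C.gen} :=
    mem_adjoin_of_smul_mem_adjoin (IsLocalization.Away.algebraMap_isUnit n) hy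
  let θ : A' →+* κ := IsLocalization.Away.lift n hnκ.isUnit
  have hθ : θ.comp (algebraMap A A') = algebraMap A κ := IsLocalization.Away.lift_comp n _
  let : Algebra A' κ := θ.toAlgebra
  let : Algebra A' F := ((algebraMap κ F).comp θ).toAlgebra
  have : IsScalarTower A' κ F := .of_algebraMap_eq fun _ ↦ rfl
  have : IsScalarTower A A' F := .of_algebraMap_eq fun r ↦ by
    rw [IsScalarTower.algebraMap_apply A κ F, ← hθ]
    rfl
  rw [← aeval_map_algebraMap A' C.gen a, ← aeval_map_algebraMap A' B.gen a]
  rw [← aeval_map_algebraMap A' C.gen a] at hmem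
  refine exists_map_fixingSubgroup_specialization B C hC.tower_top ?_
    (fun σ ↦ hmem' _ (hmem _ (.inl (.inl ⟨σ, rfl⟩))))
    (fun σ ↦ hmem' _ (hmem _ (.inl (.inr ⟨σ, rfl⟩)))) _
    (fun σ ↦ hmem' _ (hmem _ (.inr ⟨σ, rfl⟩)))
  rw [hB, minpoly_eq_map_of_isIntegral (A := A) (A' := A') K hC, Polynomial.map_map]
  exact congrArg (Polynomial.map · _) hθ.symm

end Localization

section AdjoinSimple

variable {A K Ω : Type*} [CommRing A] [Field K] [Field Ω] [Algebra A K] [Algebra K Ω] [Algebra A Ω]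
  [IsScalarTower A K Ω]

theorem lift_adjoin_simple_aeval_gen (x : Ω) (a : A[X]) :
    lift K⟮aeval (AdjoinSimple.gen K x) a⟯ = K⟮aeval x a⟯ := by
  rw [lift_adjoin_simple, ← IntermediateField.aeval_coe, AdjoinSimple.coe_gen]

/-- The field `K(a(x))`, formed inside `K(x)` or inside `Ω`. -/
noncomputable def adjoinSimpleAevalGenEquiv (x : Ω) (a : A[X]) :
    K⟮aeval (AdjoinSimple.gen K x) a⟯ ≃ₐ[K] K⟮aeval x a⟯ :=
  (liftAlgEquiv _).trans (equivOfEq (lift_adjoin_simple_aeval_gen x a))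

theorem exists_forall_aut_specialization [IsDomain A] [IsIntegrallyClosed A] [IsFractionRing A K]
    {x : Ω} (hx : IsIntegral A x) [IsGalois K K⟮x⟯] (a : A[X]) :
    ∃ n : A, n ≠ 0 ∧ ∀ {κ Ω' : Type*} [Field κ] [Field Ω'] [Algebra A κ] [Algebra κ Ω']
      [Algebra A Ω'] [IsScalarTower A κ Ω'] {y : Ω'}, algebraMap A κ n ≠ 0 →
      minpoly κ y = (minpoly A x).map (algebraMap A κ) →
      FiniteDimensional κ κ⟮aeval y a⟯ ∧ Algebra.IsSeparable κ κ⟮aeval y a⟯ ∧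
        Nonempty (Gal(κ⟮aeval y a⟯/κ) ≃* Gal(K⟮aeval x a⟯/K)) := by
  let C : PowerBasis K K⟮x⟯ := adjoin.powerBasis hx.tower_top
  have hCx : minpoly A C.gen = minpoly A x :=
    minpoly.algHom_eq (K⟮x⟯.val.restrictScalars A) Subtype.val_injective C.gen |>.symm
  have hC : IsIntegral A C.gen :=
    (isIntegral_algHom_iff (K⟮x⟯.val.restrictScalars A) Subtype.val_injective).1 hx
  obtain ⟨n, hn, hspec⟩ := exists_forall_map_fixingSubgroup_specialization C hC a
  refine ⟨n, hn, fun {κ Ω'} _ _ _ _ _ _ y hnκ hxy ↦ ?_⟩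
  have hy : IsIntegral κ y := minpoly.ne_zero_iff.1 (hxy ▸ ((minpoly.monic hx).map _).ne_zero)
  let B : PowerBasis κ κ⟮y⟯ := adjoin.powerBasis hy
  have hB : minpoly κ B.gen = (minpoly A C.gen).map (algebraMap A κ) := by
    rw [hCx, ← hxy]
    exact minpoly_gen κ y
  obtain ⟨_, e, he⟩ := hspec B hnκ hB
  have := B.finite
  have := C.finite
  let eB : κ⟮aeval B.gen a⟯ ≃ₐ[κ] κ⟮aeval y a⟯ := adjoinSimpleAevalGenEquiv y a
  let eC : K⟮aeval C.gen a⟯ ≃ₐ[K] K⟮aeval x a⟯ := adjoinSimpleAevalGenEquiv x a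
  exact ⟨eB.toLinearEquiv.finiteDimensional, AlgEquiv.Algebra.isSeparable eB,
    ⟨(AlgEquiv.autCongr eB).symm.trans
      ((autEquivOfMapFixingSubgroup e he).symm.trans (AlgEquiv.autCongr eC))⟩⟩

end AdjoinSimple

theorem isGalois_normalClosure {K E Ω : Type*} [Field K] [Field E] [Field Ω] [Algebra K E]
    [Algebra K Ω] [Algebra.IsSeparable K E] [Normal K Ω] : IsGalois K (normalClosure K E Ω) := by
  have hle : normalClosure K E Ω ≤ separableClosure K Ω := by
    rw [normalClosure_le_iff]
    rintro f _ ⟨z, rfl⟩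
    exact mem_separableClosure_iff.2 ((Algebra.IsSeparable.isSeparable K z).map f f.injective)
  have := (le_separableClosure_iff _ _ _).1 hle
  exact IsGalois.mk

theorem IsHilbertian.infinite_irreducible_and_eval_ne_zero {k : Type*} [Field k]
    (hk : IsHilbertian k) {P : k[X][X]}
    (hP : Irreducible (P.map (algebraMap k[X] (RatFunc k)))) {n : k[X]} (hn : n ≠ 0) :
    {t : k | Irreducible (P.map (evalRingHom t)) ∧ n.eval t ≠ 0}.Infinite :=
  (hk P hP).sdiff (n.finite_setOfPred_isRoot hn)

/-- Over a Hilbertian field `k`, if `E/k(T)` is finite separable with `Aut(E/k(T)) ≅ G`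
(in the specialization framework: `Ê = k(T)(x̂)` the Galois closure, `x̂` integral over
`k[T]` with minimal polynomial `P(T,X)`, and `E` generated by `a(T, x̂)`), then there are
infinitely many `t₀ ∈ k` such that the specialized extension `E_{t₀}/k` is separable with
`Aut(E_{t₀}/k) ≅ G`. -/
theorem specialization_aut (k : Type*) [Field k] (hk : IsHilbertian k)
    (G : Type*) [Group G] [Finite G]
    (E : IntermediateField (RatFunc k) (AlgebraicClosure (RatFunc k)))
    [FiniteDimensional (RatFunc k) E] [Algebra.IsSeparable (RatFunc k) E]
    (hG : Nonempty ((E ≃ₐ[RatFunc k] E) ≃* G))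
    (P a : Polynomial (Polynomial k)) (xhat : AlgebraicClosure (RatFunc k))
    (hprim : adjoin (RatFunc k) {xhat} =
      normalClosure (RatFunc k) E (AlgebraicClosure (RatFunc k)))
    (hint : IsIntegral (Polynomial k) xhat)
    (hmin : minpoly (RatFunc k) xhat = P.map (algebraMap (Polynomial k) (RatFunc k)))
    (hgen : adjoin (RatFunc k)
      {Polynomial.eval₂ (algebraMap (Polynomial k) (AlgebraicClosure (RatFunc k))) xhat a} = E) :
    {t₀ : k |
      Irreducible (P.map (evalRingHom t₀)) ∧
      ∀ xt : AlgebraicClosure k, aeval xt (P.map (evalRingHom t₀)) = 0 →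
        FiniteDimensional k
          (adjoin k ({Polynomial.eval₂ ((algebraMap k (AlgebraicClosure k)).comp
            (evalRingHom t₀)) xt a} : Set (AlgebraicClosure k))) ∧
        Algebra.IsSeparable k
          (adjoin k ({Polynomial.eval₂ ((algebraMap k (AlgebraicClosure k)).comp
            (evalRingHom t₀)) xt a} : Set (AlgebraicClosure k))) ∧
        Nonempty
          ((adjoin k ({Polynomial.eval₂ ((algebraMap k (AlgebraicClosure k)).comp
              (evalRingHom t₀)) xt a} : Set (AlgebraicClosure k)) ≃ₐ[k]
            adjoin k ({Polynomial.eval₂ ((algebraMap k (AlgebraicClosure k)).comp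
              (evalRingHom t₀)) xt a} : Set (AlgebraicClosure k))) ≃* G)}.Infinite := by
  obtain rfl : P = minpoly k[X] xhat := map_injective _ (IsFractionRing.injective k[X] (RatFunc k))
    (hmin ▸ minpoly.isIntegrallyClosed_eq_field_fractions' (RatFunc k) hint)
  have : IsGalois (RatFunc k) (adjoin (RatFunc k) {xhat}) := hprim ▸ isGalois_normalClosure
  obtain ⟨n, hn, hspec⟩ := exists_forall_aut_specialization (K := RatFunc k) hint a
  have hirr : Irreducible ((minpoly k[X] xhat).map (algebraMap k[X] (RatFunc k))) :=
    hmin ▸ minpoly.irreducible hint.tower_top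
  refine (hk.infinite_irreducible_and_eval_ne_zero hirr hn).mono ?_
  rintro t₀ ⟨ht, hnt⟩
  refine ⟨ht, fun xt hxt ↦ ?_⟩
  let := (evalRingHom t₀).toAlgebra
  have hxt' : minpoly k xt = (minpoly k[X] xhat).map (evalRingHom t₀) :=
    (minpoly.eq_of_irreducible_of_monic ht hxt ((minpoly.monic hint).map _)).symm
  obtain ⟨hfin, hsep, ⟨e⟩⟩ := hspec hnt hxt'
  obtain ⟨r⟩ := hG
  subst hgen
  exact ⟨hfin, hsep, ⟨e.trans r⟩⟩
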